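/- Let C ⊆ F_q^{n×m} be a rank-metric code in which any two distinct codewords are at rank distance at least d. Let μ, δ, ε ≥ 0 satisfy 2ε + μ + δ ≤ d − 1. Let x ∈ C, r ∈ F_q^{n×m}, L̂ ∈ F_q^{n×μ} with rank L̂ = μ, and Ê ∈ F_q^{δ×m} with rank Ê = δ, and suppose rank [[L̂ , r − x],[0 , Ê]] = μ + δ + ε. Then for every x' ∈ C with x' ≠ x one has rank [[L̂ , r − x'],[0 , Ê]] > μ + δ + ε; that is, x is the unique minimizer over C of rank [[L̂ , r − c],[0 , Ê]], so every pattern of ε errors, μ erasures and δ deviations is correctable. -/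

import Mathlib

open Matrix

theorem aux_rank_add_le {F a b : Type*} [Field F] [Fintype a] [Fintype b]
    (A B : Matrix a b F) : (A + B).rank ≤ A.rank + B.rank := by
  unfold Matrix.rank
  rw [Matrix.mulVecLin_add]
  refine le_trans (Submodule.finrank_mono ?_) (Submodule.finrank_add_le_finrank_add_finrank _ _)
  rintro _ ⟨v, rfl⟩
  exact Submodule.add_mem_sup ⟨v, rfl⟩ ⟨v, rfl⟩

theorem aux_rank_diag {F a b c e : Type*} [Field F] [Fintype a] [Fintype b] [Fintype c] [Fintype e]
    (A : Matrix a b F) (D : Matrix c e F) :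
    A.rank + D.rank ≤ (Matrix.fromBlocks A 0 0 D).rank := by
  unfold Matrix.rank
  rw [← Module.finrank_prod]
  let φ : (LinearMap.range A.mulVecLin × LinearMap.range D.mulVecLin) →ₗ[F] (a ⊕ c → F) :=
    (LinearEquiv.sumArrowLequivProdArrow a c F F).symm.toLinearMap ∘ₗ
      (LinearMap.prodMap (Submodule.subtype _) (Submodule.subtype _))
  have hφ : Function.Injective φ := by
    refine (LinearEquiv.sumArrowLequivProdArrow a c F F).symm.injective.comp ?_
    rintro ⟨u, v⟩ ⟨u', v'⟩ h
    exact Prod.ext (Subtype.ext (congrArg Prod.fst h)) (Subtype.ext (congrArg Prod.snd h))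
  rw [← LinearMap.finrank_range_of_inj hφ]
  apply Submodule.finrank_mono
  rintro _ ⟨⟨⟨_, u, rfl⟩, ⟨_, v, rfl⟩⟩, rfl⟩
  refine ⟨Sum.elim u v, ?_⟩
  ext i
  rcases i with i | i <;> simp [φ, Matrix.fromBlocks_mulVec, LinearEquiv.sumArrowLequivProdArrow]

theorem aux_right_inv {F : Type*} [Field F] {m δ : ℕ} (E : Matrix (Fin δ) (Fin m) F)
    (hE : E.rank = δ) : ∃ E' : Matrix (Fin m) (Fin δ) F, E * E' = 1 := by
  rw [← Matrix.mulVec_surjective_iff_exists_right_inverse]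
  have : LinearMap.range E.mulVecLin = ⊤ := by
    apply Submodule.eq_top_of_finrank_eq
    simpa [Matrix.rank] using hE
  exact LinearMap.range_eq_top.mp this

theorem aux_lower {F : Type*} [Field F] {n m μ δ : ℕ}
    (L : Matrix (Fin n) (Fin μ) F) (E : Matrix (Fin δ) (Fin m) F) (e : Matrix (Fin n) (Fin m) F)
    (L' : Matrix (Fin μ) (Fin n) F) (E' : Matrix (Fin m) (Fin δ) F)
    (hL : L' * L = 1) (hE : E * E' = 1)
    (P : Matrix (Fin n) (Fin n) F) (Q : Matrix (Fin m) (Fin m) F)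
    (hP : P = 1 - L * L') (hQ : Q = 1 - E' * E) :
    μ + ((P * e * Q).rank + δ) ≤ (Matrix.fromBlocks L e 0 E).rank := by
  have hPL : P * L = 0 := by
    rw [hP, Matrix.sub_mul, Matrix.mul_assoc, hL]; simp
  have hEQ : E * Q = 0 := by
    rw [hQ, Matrix.mul_sub, ← Matrix.mul_assoc, hE]; simp
  have hQE : Q * E' = 0 := by
    rw [hQ, Matrix.sub_mul, Matrix.mul_assoc, hE]; simp
  have hQQ : Q * Q = Q := by
    nth_rw 1 [hQ]
    rw [Matrix.sub_mul, Matrix.mul_assoc, hEQ]; simp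
  have h1 : ∀ X : Matrix (Fin n) (Fin m) F, X + -(X * E' * E) = X * Q := by
    intro X; rw [hQ, Matrix.mul_sub, Matrix.mul_assoc, Matrix.mul_one, sub_eq_add_neg]
  have h2 : ∀ X : Matrix (Fin μ) (Fin m) F, X + -(X * E' * E) = X * Q := by
    intro X; rw [hQ, Matrix.mul_sub, Matrix.mul_assoc, Matrix.mul_one, sub_eq_add_neg]
  let U := Matrix.fromBlocks L' (-(L' * e * E')) (Matrix.fromRows P 0)
    (Matrix.fromRows (-(P * e * E')) (1 : Matrix (Fin δ) (Fin δ) F))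
  let V := Matrix.fromBlocks (1 : Matrix (Fin μ) (Fin μ) F)
    (Matrix.fromCols (-(L' * e * Q)) (0 : Matrix (Fin μ) (Fin δ) F)) 0 (Matrix.fromCols Q E')
  have hU : U * Matrix.fromBlocks L e 0 E =
      Matrix.fromBlocks 1 (L' * e * Q) 0 (Matrix.fromRows (P * e * Q) E) := by
    simp only [U, Matrix.fromBlocks_multiply]
    congr 1
    · simp [hL]
    · rw [Matrix.neg_mul, h2]
    · simp [Matrix.fromRows_mul, hPL]
    · rw [Matrix.fromRows_mul, Matrix.fromRows_mul, Matrix.neg_mul, ← h1 (P * e)]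
      ext i j
      rcases i with i | i <;> simp
  have hUV : U * Matrix.fromBlocks L e 0 E * V =
      Matrix.fromBlocks 1 0 0 (Matrix.fromBlocks (P * e * Q) 0 0 1) := by
    rw [hU]
    simp only [V, Matrix.fromBlocks_multiply]
    congr 1
    · simp
    · rw [Matrix.one_mul, Matrix.mul_fromCols, Matrix.mul_assoc _ Q Q, hQQ,
        Matrix.mul_assoc _ Q E', hQE]
      ext i j
      rcases j with j | j <;> simp
    · simp
    · rw [Matrix.fromRows_mul_fromCols, Matrix.mul_assoc _ Q Q, hQQ,
        Matrix.mul_assoc _ Q E', hQE, hEQ, hE]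
      simp
  have h3 := aux_rank_diag (1 : Matrix (Fin μ) (Fin μ) F)
    (Matrix.fromBlocks (P * e * Q) 0 0 (1 : Matrix (Fin δ) (Fin δ) F))
  have h4 := aux_rank_diag (P * e * Q) (1 : Matrix (Fin δ) (Fin δ) F)
  rw [← hUV] at h3
  have h5 := Matrix.rank_mul_le_left (U * Matrix.fromBlocks L e 0 E) V
  have h6 := Matrix.rank_mul_le_right U (Matrix.fromBlocks L e 0 E)
  simp only [Matrix.rank_one, Fintype.card_fin] at h3 h4
  omega



/-- a rank-metric code with minimum rank distance `d` corrects
every pattern of `ε` errors, `μ` erasures and `δ` deviations provided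
`2ε + μ + δ ≤ d − 1`: the transmitted codeword is the unique minimizer of
`rank [[L, r − c],[0, E]]` over `c ∈ C`. -/
theorem errata_correction_capability
    {F : Type*} [Field F] [Fintype F] {n m μ δ ε d : ℕ}
    (C : Set (Matrix (Fin n) (Fin m) F))
    (hC : ∀ a ∈ C, ∀ b ∈ C, a ≠ b → d ≤ (b - a).rank)
    (hεμδ : 2 * ε + μ + δ + 1 ≤ d)
    (x : Matrix (Fin n) (Fin m) F) (hx : x ∈ C)
    (r : Matrix (Fin n) (Fin m) F)
    (L : Matrix (Fin n) (Fin μ) F) (hL : L.rank = μ)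
    (E : Matrix (Fin δ) (Fin m) F) (hE : E.rank = δ)
    (hrk : (Matrix.fromBlocks L (r - x) 0 E).rank = μ + δ + ε) :
    ∀ x' ∈ C, x' ≠ x →
      μ + δ + ε < (Matrix.fromBlocks L (r - x') 0 E).rank := by
  intro x' hx' hne
  obtain ⟨E', hE'⟩ := aux_right_inv E hE
  obtain ⟨L1, hL1⟩ := aux_right_inv Lᵀ (by rw [Matrix.rank_transpose, hL])
  have hL' : L1ᵀ * L = 1 := by
    have := congrArg Matrix.transpose hL1
    simpa [Matrix.transpose_mul] using this
  have a1 := aux_lower L E (r - x) _ E' hL' hE' _ _ rfl rfl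
  have a2 := aux_lower L E (r - x') _ E' hL' hE' _ _ rfl rfl
  have hd := hC x hx x' hx' hne.symm
  set P := (1 : Matrix (Fin n) (Fin n) F) - L * L1ᵀ with hP
  set Q := (1 : Matrix (Fin m) (Fin m) F) - E' * E with hQ
  have hdec : x' - x = (P * (r - x) * Q + P * (-(r - x')) * Q) +
      (L * (L1ᵀ * (x' - x)) + P * (x' - x) * E' * E) := by
    have e1 : P * (r - x) * Q + P * (-(r - x')) * Q = P * (x' - x) * Q := by
      rw [← Matrix.add_mul, ← Matrix.mul_add]
      congr 2
      abel
    rw [e1, hQ, Matrix.mul_sub, Matrix.mul_one, ← Matrix.mul_assoc (P * (x' - x)) E' E, hP,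
      Matrix.sub_mul 1 (L * L1ᵀ) (x' - x), Matrix.one_mul, Matrix.mul_assoc L]
    abel
  have hneg : (P * (-(r - x')) * Q).rank ≤ (P * (r - x') * Q).rank := by
    have : P * (-(r - x')) * Q = (P * (r - x') * Q) * (-1 : Matrix (Fin m) (Fin m) F) := by
      rw [Matrix.mul_neg, Matrix.neg_mul, Matrix.mul_neg, Matrix.mul_one]
    rw [this]
    exact Matrix.rank_mul_le_left _ _
  have b1 := aux_rank_add_le (P * (r - x) * Q + P * (-(r - x')) * Q)
      (L * (L1ᵀ * (x' - x)) + P * (x' - x) * E' * E)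
  rw [← hdec] at b1
  have b2 := aux_rank_add_le (P * (r - x) * Q) (P * (-(r - x')) * Q)
  have b3 := aux_rank_add_le (L * (L1ᵀ * (x' - x))) (P * (x' - x) * E' * E)
  have b4 := Matrix.rank_mul_le_left L (L1ᵀ * (x' - x))
  have b5 := Matrix.rank_mul_le_right (P * (x' - x) * E') E
  omega
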